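/- For every integer ν ≥ 2, the unique positive solution Ω* of the equation Ω²/(ν(ν−1)) = (1 − γ(ν+1, Ω))/γ(ν−1, Ω) satisfies ν−1 < Ω* < ν. -/

import Mathlib

open Real Filter

/-- Normalized lower incomplete gamma function. -/
noncomputable def lowerGamma (t u : ℝ) : ℝ :=
  (∫ s in (0:ℝ)..u, s ^ (t - 1) * Real.exp (-s)) / Real.Gamma t

/-!
After clearing denominators the equation reads `B(Ω) = 1`, where
`B(x) = x² / (ν(ν-1)) · γ(ν-1, x) + γ(ν+1, x)` is continuous and strictly increasing on `[0, ∞)`.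
It remains to see `B(ν-1) < 1 < B(ν)`. Both bounds compare the values of `g(s) = sᵗ e⁻ˢ` on the two
sides of its mode `t`.

* At `t = ν - 1`, the recurrence `γ(t+1, x) = γ(t, x) - xᵗ e⁻ˣ / Γ(t+1)` turns `B(t)` into
  `(2t+1)/(t+1) · γ(t+1, t)`. Reflection about the mode, `g(t-u) < g(t+u)`, makes
  `u ↦ γ(t+1, t-u) + γ(t+1, t+u)` increasing, so that `2γ(t+1, t) < γ(t+1, 2t) < 1`.
* At `t = ν`, inversion about the mode, `g(x) < g(t²/x)` for `x > t`, makes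
  `x ↦ t/(t-1) · γ(t-1, t²/x) + γ(t+1, x)` decreasing on `[t, ∞)`, from `B(t)` at `x = t` to `1`
  at infinity.
-/

open Set Topology

section

variable {t u x y : ℝ}

lemma intervalIntegrable_rpow_sub_one_mul_exp_neg (ht : 0 < t) (a b : ℝ) :
    IntervalIntegrable (fun s ↦ s ^ (t - 1) * exp (-s)) MeasureTheory.volume a b :=
  (intervalIntegral.intervalIntegrable_rpow' (by linarith)).mul_continuousOn (by fun_prop)

lemma lowerGamma_zero (t : ℝ) : lowerGamma t 0 = 0 := by
  simp [lowerGamma]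

lemma continuous_lowerGamma (ht : 0 < t) : Continuous (lowerGamma t) :=
  (intervalIntegral.continuous_primitive
    (intervalIntegrable_rpow_sub_one_mul_exp_neg ht) 0).div_const _

lemma hasDerivAt_lowerGamma (ht : 0 < t) (hx : 0 < x) :
    HasDerivAt (lowerGamma t) (x ^ (t - 1) * exp (-x) / Gamma t) x := by
  have hmeas : Measurable fun s : ℝ ↦ s ^ (t - 1) * exp (-s) := by fun_prop
  have hcont : ContinuousAt (fun s : ℝ ↦ s ^ (t - 1) * exp (-s)) x :=
    (continuousAt_rpow_const x _ (.inl hx.ne')).mul (by fun_prop)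
  exact (intervalIntegral.integral_hasDerivAt_right
    (intervalIntegrable_rpow_sub_one_mul_exp_neg ht 0 x)
    hmeas.stronglyMeasurable.stronglyMeasurableAtFilter hcont).div_const _

lemma strictMonoOn_lowerGamma (ht : 0 < t) : StrictMonoOn (lowerGamma t) (Ici 0) := by
  refine strictMonoOn_of_hasDerivWithinAt_pos (convex_Ici 0)
    (continuous_lowerGamma ht).continuousOn
    (f' := fun x ↦ x ^ (t - 1) * exp (-x) / Gamma t) ?_ ?_ <;>
  rw [interior_Ici] <;> intro x (hx : 0 < x)
  · exact (hasDerivAt_lowerGamma ht hx).hasDerivWithinAt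
  · have := Gamma_pos_of_pos ht
    positivity

lemma lowerGamma_pos (ht : 0 < t) (hx : 0 < x) : 0 < lowerGamma t x := by
  simpa only [lowerGamma_zero] using
    strictMonoOn_lowerGamma ht self_mem_Ici (mem_Ici.2 hx.le) hx

lemma lowerGamma_nonneg (ht : 0 < t) (hx : 0 ≤ x) : 0 ≤ lowerGamma t x := by
  simpa only [lowerGamma_zero] using
    (strictMonoOn_lowerGamma ht).monotoneOn self_mem_Ici (mem_Ici.2 hx) hx

lemma tendsto_lowerGamma_atTop (ht : 0 < t) : Tendsto (lowerGamma t) atTop (𝓝 1) := by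
  rw [← div_self (Gamma_pos_of_pos ht).ne']
  refine Tendsto.div_const ?_ _
  have hint := GammaIntegral_convergent ht
  rw [Gamma_eq_integral ht]
  simp only [mul_comm (exp _)] at hint ⊢
  exact MeasureTheory.intervalIntegral_tendsto_integral_Ioi 0 hint tendsto_id

lemma lowerGamma_lt_one (ht : 0 < t) (hx : 0 ≤ x) : lowerGamma t x < 1 := by
  have hmono := strictMonoOn_lowerGamma ht
  have hx' : x + 1 ∈ Ici (0 : ℝ) := mem_Ici.2 (by linarith)
  calc lowerGamma t x < lowerGamma t (x + 1) := hmono hx hx' (by linarith)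
    _ ≤ 1 := ge_of_tendsto (tendsto_lowerGamma_atTop ht) <|
      (eventually_ge_atTop (x + 1)).mono fun y hy ↦
        hmono.monotoneOn hx' (mem_Ici.2 (hx'.out.trans hy)) hy

lemma lowerGamma_add_one (ht : 0 < t) (hx : 0 ≤ x) :
    lowerGamma (t + 1) x = lowerGamma t x - x ^ t * exp (-x) / Gamma (t + 1) := by
  have hcont : Continuous fun s : ℝ ↦ s ^ t * exp (-s) :=
    (continuous_rpow_const ht.le).mul (by fun_prop)
  have hderiv (s : ℝ) (hs : s ∈ Ioo 0 x) : HasDerivAt (fun s : ℝ ↦ s ^ t * exp (-s))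
      (t * (s ^ (t - 1) * exp (-s)) - s ^ t * exp (-s)) s :=
    ((hasDerivAt_rpow_const (.inl hs.1.ne')).mul (hasDerivAt_neg s).exp).congr_deriv (by ring)
  have hint := (intervalIntegrable_rpow_sub_one_mul_exp_neg ht 0 x).const_mul t
  have hint' := hcont.intervalIntegrable (μ := MeasureTheory.volume) 0 x
  have hparts := intervalIntegral.integral_eq_sub_of_hasDerivAt_of_le hx hcont.continuousOn hderiv
    (hint.sub hint')
  rw [intervalIntegral.integral_sub hint hint', intervalIntegral.integral_const_mul,
    zero_rpow ht.ne', zero_mul, sub_zero] at hparts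
  have hΓ := (Gamma_pos_of_pos ht).ne'
  simp only [lowerGamma, add_sub_cancel_right, Gamma_add_one ht.ne']
  field_simp
  linear_combination -hparts

lemma rpow_mul_exp_neg_lt_iff (hx : 0 < x) (hy : 0 < y) :
    x ^ t * exp (-x) < y ^ t * exp (-y) ↔ t * log x - x < t * log y - y := by
  simp only [rpow_def_of_pos hx, rpow_def_of_pos hy, ← exp_add, exp_lt_exp, ← sub_eq_add_neg,
    mul_comm t]

lemma rpow_mul_exp_neg_sub_lt_add (hu : 0 < u) (hut : u < t) :
    (t - u) ^ t * exp (-(t - u)) < (t + u) ^ t * exp (-(t + u)) := by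
  have htu : 0 < t - u := sub_pos.2 hut
  have ht : 0 < t := hu.trans hut
  rw [rpow_mul_exp_neg_lt_iff htu (by positivity)]
  have hlog : 2 * u / t < log (t + u) - log (t - u) := by
    have hratio : 1 + 2 * u / (t - u) = (t + u) / (t - u) := by field_simp; ring
    have hbound : 2 * (2 * u / (t - u)) / (2 * u / (t - u) + 2) = 2 * u / t := by field_simp; ring
    rw [← log_div (by positivity) htu.ne', ← hratio, ← hbound]
    exact lt_log_one_add_of_pos (by positivity)
  rw [div_lt_iff₀ ht] at hlog
  linarith

lemma rpow_mul_exp_neg_lt_inversion (ht : 0 < t) (htx : t < x) :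
    x ^ t * exp (-x) < (t ^ 2 / x) ^ t * exp (-(t ^ 2 / x)) := by
  have hx : 0 < x := ht.trans htx
  rw [rpow_mul_exp_neg_lt_iff hx (by positivity), log_div (by positivity) hx.ne', log_pow]
  have hsinh : log (x / t) < (x / t - (x / t)⁻¹) / 2 := by
    rw [← sinh_log (by positivity), self_lt_sinh_iff]
    exact log_pos ((one_lt_div ht).2 htx)
  rw [log_div hx.ne' ht.ne'] at hsinh
  have hscale : 2 * t * ((x / t - (x / t)⁻¹) / 2) = x - t ^ 2 / x := by field_simp
  have := mul_lt_mul_of_pos_left hsinh (mul_pos two_pos ht)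
  push_cast
  linarith

lemma strictMonoOn_lowerGamma_sub_add_lowerGamma_add (ht : 0 < t) :
    StrictMonoOn (fun u ↦ lowerGamma (t + 1) (t - u) + lowerGamma (t + 1) (t + u))
      (Icc 0 t) := by
  have ht' : 0 < t + 1 := by linarith
  have hcont := continuous_lowerGamma ht'
  refine strictMonoOn_of_hasDerivWithinAt_pos (convex_Icc 0 t) (by fun_prop)
    (f' := fun u ↦ ((t + u) ^ t * exp (-(t + u)) - (t - u) ^ t * exp (-(t - u))) / Gamma (t + 1))
    ?_ ?_ <;>
  rw [interior_Icc] <;> rintro u ⟨hu, hut⟩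
  · have hsub := (hasDerivAt_lowerGamma ht' (sub_pos.2 hut)).comp_const_sub t u
    have hadd := (hasDerivAt_lowerGamma ht' (add_pos ht hu)).comp_const_add t u
    refine ((hsub.add hadd).congr_deriv ?_).hasDerivWithinAt
    simp only [add_sub_cancel_right]
    ring
  · exact div_pos (sub_pos.2 (rpow_mul_exp_neg_sub_lt_add hu hut)) (Gamma_pos_of_pos ht')

lemma lowerGamma_add_one_self_lt_half (ht : 0 < t) : lowerGamma (t + 1) t < 1 / 2 := by
  have hlt := strictMonoOn_lowerGamma_sub_add_lowerGamma_add ht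
    (left_mem_Icc.2 ht.le) (right_mem_Icc.2 ht.le) ht
  simp only [sub_zero, add_zero, sub_self, lowerGamma_zero, zero_add] at hlt
  linarith [lowerGamma_lt_one (t := t + 1) (x := t + t) (by linarith) (by linarith)]

lemma hasDerivAt_lowerGamma_inversion (ht : 1 < t) (hx : 0 < x) :
    HasDerivAt (fun x ↦ t / (t - 1) * lowerGamma (t - 1) (t ^ 2 / x) + lowerGamma (t + 1) x)
      ((x ^ t * exp (-x) - (t ^ 2 / x) ^ t * exp (-(t ^ 2 / x))) / Gamma (t + 1)) x := by
  have ht0 : 0 < t := by linarith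
  have ht1 : 0 < t - 1 := by linarith
  have hinv : HasDerivAt (fun x ↦ t ^ 2 / x) (-(t ^ 2 / x ^ 2)) x :=
    ((hasDerivAt_inv hx.ne').const_mul (t ^ 2)).congr_deriv (by ring)
  have hleft := (hasDerivAt_lowerGamma ht1 (x := t ^ 2 / x) (by positivity)).comp x hinv
  have hright := hasDerivAt_lowerGamma (t := t + 1) (by linarith) hx
  refine ((hleft.const_mul _).add hright).congr_deriv ?_
  have hΓ : Gamma (t + 1) = t * ((t - 1) * Gamma (t - 1)) := by
    rw [Gamma_add_one ht0.ne', ← Gamma_add_one ht1.ne', sub_add_cancel]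
  have hpow : (t ^ 2 / x) ^ t = (t ^ 2 / x) ^ (t - 1 - 1) * (t ^ 2 / x) ^ 2 := by
    rw [← rpow_add_natCast (by positivity)]
    congr 1
    push_cast
    ring
  have := (Gamma_pos_of_pos ht1).ne'
  rw [hΓ, hpow, add_sub_cancel_right]
  field_simp
  ring

lemma strictAntiOn_lowerGamma_inversion (ht : 1 < t) :
    StrictAntiOn
      (fun x ↦ t / (t - 1) * lowerGamma (t - 1) (t ^ 2 / x) + lowerGamma (t + 1) x) (Ici t) := by
  have ht0 : 0 < t := by linarith
  have hderiv (x : ℝ) (hx : x ∈ Ici t) := hasDerivAt_lowerGamma_inversion ht (ht0.trans_le hx)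
  refine strictAntiOn_of_hasDerivWithinAt_neg (convex_Ici t)
    (fun x hx ↦ (hderiv x hx).continuousAt.continuousWithinAt)
    (fun x hx ↦ (hderiv x (interior_subset hx)).hasDerivWithinAt) ?_
  rw [interior_Ici]
  intro x hx
  exact div_neg_of_neg_of_pos (sub_neg.2 (rpow_mul_exp_neg_lt_inversion ht0 hx))
    (Gamma_pos_of_pos (by linarith))

end

/-- The function of `x` whose value is `1` exactly at the positive solutions `x = Ω` of the
optimality condition, obtained from it by clearing the denominator `γ(ν-1, x)`. -/
noncomputable def optimalityBalance (ν x : ℝ) : ℝ :=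
  x ^ 2 / (ν * (ν - 1)) * lowerGamma (ν - 1) x + lowerGamma (ν + 1) x

section

variable {ν x : ℝ}

lemma optimalityBalance_eq_one_iff (hν : 1 < ν) (hx : 0 < x) :
    optimalityBalance ν x = 1 ↔
      x ^ 2 / (ν * (ν - 1)) = (1 - lowerGamma (ν + 1) x) / lowerGamma (ν - 1) x := by
  rw [eq_div_iff (lowerGamma_pos (sub_pos.2 hν) hx).ne', eq_sub_iff_add_eq, optimalityBalance]

lemma continuous_optimalityBalance (hν : 1 < ν) : Continuous (optimalityBalance ν) := by
  have hleft := continuous_lowerGamma (t := ν - 1) (by linarith)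
  have hright := continuous_lowerGamma (t := ν + 1) (by linarith)
  unfold optimalityBalance
  fun_prop

lemma strictMonoOn_optimalityBalance (hν : 1 < ν) :
    StrictMonoOn (optimalityBalance ν) (Ici 0) := by
  have hν1 : 0 < ν - 1 := by linarith
  intro x hx y hy hxy
  have hx0 : 0 ≤ x := hx
  have hleft := (strictMonoOn_lowerGamma hν1).monotoneOn hx hy hxy.le
  have hright := strictMonoOn_lowerGamma (t := ν + 1) (by linarith) hx hy hxy
  have := lowerGamma_nonneg hν1 hx0
  refine add_lt_add_of_le_of_lt ?_ hright
  gcongr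

lemma optimalityBalance_sub_one_lt_one (hν : 1 < ν) : optimalityBalance ν (ν - 1) < 1 := by
  obtain ⟨t, rfl⟩ : ∃ t, ν = t + 1 := ⟨ν - 1, by ring⟩
  have ht : 0 < t := by linarith
  have hΓ := (Gamma_pos_of_pos (add_pos ht one_pos)).ne'
  have hbalance : optimalityBalance (t + 1) t = (2 * t + 1) / (t + 1) * lowerGamma (t + 1) t := by
    rw [optimalityBalance, add_sub_cancel_right,
      lowerGamma_add_one (t := t + 1) (by linarith) ht.le, lowerGamma_add_one ht ht.le,
      Gamma_add_one (s := t + 1) (by linarith), rpow_add_one ht.ne']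
    field_simp
    ring
  rw [add_sub_cancel_right, hbalance]
  calc (2 * t + 1) / (t + 1) * lowerGamma (t + 1) t
      < (2 * t + 1) / (t + 1) * (1 / 2) := by
        gcongr
        exact lowerGamma_add_one_self_lt_half ht
    _ < 1 := by
        rw [div_mul_div_comm, div_lt_one (by positivity)]
        linarith

lemma one_lt_optimalityBalance_self (hν : 1 < ν) : 1 < optimalityBalance ν ν := by
  have hν0 : 0 < ν := by linarith
  have hν1 : 0 < ν - 1 := by linarith
  have hanti := strictAntiOn_lowerGamma_inversion hν
  have h2ν : 2 * ν ∈ Ici ν := mem_Ici.2 (by linarith)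
  calc 1 ≤ ν / (ν - 1) * lowerGamma (ν - 1) (ν ^ 2 / (2 * ν)) + lowerGamma (ν + 1) (2 * ν) := by
        refine le_of_tendsto (tendsto_lowerGamma_atTop (t := ν + 1) (by linarith)) ?_
        filter_upwards [eventually_ge_atTop (2 * ν)] with x hx
        have hx0 : 0 < x := by linarith
        have := lowerGamma_nonneg hν1 (x := ν ^ 2 / x) (by positivity)
        refine le_trans ?_ (hanti.antitoneOn h2ν (h2ν.out.trans hx) hx)
        exact le_add_of_nonneg_left (by positivity)
    _ < ν / (ν - 1) * lowerGamma (ν - 1) (ν ^ 2 / ν) + lowerGamma (ν + 1) ν :=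
        hanti self_mem_Ici h2ν (by linarith)
    _ = optimalityBalance ν ν := by
        rw [optimalityBalance, sq, mul_div_mul_left _ _ hν0.ne', mul_div_cancel_right₀ _ hν0.ne']

end

theorem stmt18_general {ν : ℝ} (hν : 1 < ν) :
    (∃! Ω : ℝ, 0 < Ω ∧
      Ω ^ 2 / (ν * (ν - 1)) = (1 - lowerGamma (ν + 1) Ω) / lowerGamma (ν - 1) Ω) ∧
    ∀ Ω : ℝ, 0 < Ω →
      Ω ^ 2 / (ν * (ν - 1)) = (1 - lowerGamma (ν + 1) Ω) / lowerGamma (ν - 1) Ω →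
      ν - 1 < Ω ∧ Ω < ν := by
  have hν1 : 0 < ν - 1 := by linarith
  have hmono := strictMonoOn_optimalityBalance hν
  have hlower := optimalityBalance_sub_one_lt_one hν
  have hupper := one_lt_optimalityBalance_self hν
  constructor
  · obtain ⟨Ω, hΩ, hroot⟩ := intermediate_value_Icc (sub_le_self ν zero_le_one)
      (continuous_optimalityBalance hν).continuousOn ⟨hlower.le, hupper.le⟩
    have hΩ0 : 0 < Ω := hν1.trans_le hΩ.1
    refine ⟨Ω, ⟨hΩ0, (optimalityBalance_eq_one_iff hν hΩ0).1 hroot⟩, fun y ⟨hy0, hy⟩ ↦ ?_⟩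
    exact hmono.injOn hy0.le hΩ0.le
      (((optimalityBalance_eq_one_iff hν hy0).2 hy).trans hroot.symm)
  · intro Ω hΩ0 hΩ
    rw [← optimalityBalance_eq_one_iff hν hΩ0] at hΩ
    exact ⟨(hmono.lt_iff_lt hν1.le hΩ0.le).1 (hlower.trans_eq hΩ.symm),
      (hmono.lt_iff_lt hΩ0.le (zero_le_one.trans hν.le)).1 (hΩ.trans_lt hupper)⟩

theorem stmt18 (ν : ℕ) (hν : 2 ≤ ν) :
    (∃! Ω : ℝ, 0 < Ω ∧
      Ω ^ 2 / ((ν : ℝ) * ((ν : ℝ) - 1)) =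
        (1 - lowerGamma ((ν : ℝ) + 1) Ω) / lowerGamma ((ν : ℝ) - 1) Ω) ∧
    ∀ Ω : ℝ, 0 < Ω →
      Ω ^ 2 / ((ν : ℝ) * ((ν : ℝ) - 1)) =
        (1 - lowerGamma ((ν : ℝ) + 1) Ω) / lowerGamma ((ν : ℝ) - 1) Ω →
      (ν : ℝ) - 1 < Ω ∧ Ω < (ν : ℝ) :=
  stmt18_general (by exact_mod_cast hν)
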